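/- arXiv:1411.3173 — 8 statements merged into one kernel-verified Lean document; each statement's English description precedes it below -/
import Mathlib

section
/- Let (X_t)_{t∈T} be a family of nonempty topological spaces, X = ∏_{t∈T} X_t, a ∈ X, and let E ⊆ X be ℵ₀-invariant with respect to a. If E (with the subspace topology) is pseudo-ℵ₁-compact, then for every finite nonempty set S ⊆ T and every uncountable family (U_i)_{i∈I} of open subsets of X with U_i ∩ E ≠ ∅ for all i ∈ I, the family (p_S(U_i ∩ E))_{i∈I} is not locally finite in the subspace p_S(E). -/
/-!
Suppose the projections `p_S(U i ∩ E)` were locally finite in `p_S(E)`. Since `p_S : E → p_S(E)` is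
continuous, their preimages form a locally finite family in `E`, and hence so do the smaller sets
`U i ∩ E`. These are nonempty and open in `E`, so pseudo-ℵ₁-compactness leaves only countably many
distinct ones. Each of them, being nonempty, occurs for only finitely many `i` by local finiteness,
so the index set is countable, a contradiction.
-/

open Set Topology

/-- A topological space is pseudo-ℵ₁-compact if every locally finite family of
(pairwise distinct) nonempty open subsets is at most countable. -/
def PseudoAleph1Compact (Z : Type*) [TopologicalSpace Z] : Prop :=
  ∀ 𝒰 : Set (Set Z), (∀ U ∈ 𝒰, IsOpen U) → (∀ U ∈ 𝒰, U.Nonempty) →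
    LocallyFinite (fun U : 𝒰 => (U : Set Z)) → 𝒰.Countable

/-- `A` is functionally closed in `Z` if it is the zero set of a continuous real function. -/
def FunctionallyClosed {Z : Type*} [TopologicalSpace Z] (A : Set Z) : Prop :=
  ∃ f : Z → ℝ, Continuous f ∧ A = f ⁻¹' {0}

/-- `A` is functionally open in `Z` if its complement is functionally closed. -/
def FunctionallyOpen {Z : Type*} [TopologicalSpace Z] (A : Set Z) : Prop :=
  FunctionallyClosed Aᶜ

/-- `FunClass Z true α A` : `A` is of the functionally additive class `α` in `Z`;
`FunClass Z false α A` : `A` is of the functionally multiplicative class `α` in `Z`. -/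
inductive FunClass (Z : Type*) [TopologicalSpace Z] : Bool → Ordinal.{0} → Set Z → Prop
  | open_ (A : Set Z) (h : FunctionallyOpen A) : FunClass Z true 0 A
  | closed_ (A : Set Z) (h : FunctionallyClosed A) : FunClass Z false 0 A
  | union (α : Ordinal.{0}) (A : ℕ → Set Z) (β : ℕ → Ordinal.{0}) (hα : α ≠ 0)
      (hβ : ∀ n, β n < α) (h : ∀ n, FunClass Z false (β n) (A n)) :
      FunClass Z true α (⋃ n, A n)
  | inter (α : Ordinal.{0}) (A : ℕ → Set Z) (β : ℕ → Ordinal.{0}) (hα : α ≠ 0)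
      (hβ : ∀ n, β n < α) (h : ∀ n, FunClass Z true (β n) (A n)) :
      FunClass Z false α (⋂ n, A n)

/-- `A` is α-embedded in `Z` if every subset of `A` of functionally multiplicative class `α`
in the subspace `A` is the trace on `A` of a set of functionally multiplicative class `α` in `Z`. -/
def IsAlphaEmbedded {Z : Type*} [TopologicalSpace Z] (α : Ordinal.{0}) (A : Set Z) : Prop :=
  ∀ B : Set Z, B ⊆ A → FunClass ↥A false α (Subtype.val ⁻¹' B) →
    ∃ C : Set Z, FunClass Z false α C ∧ C ∩ A = B

/-- `Z` is α-universal if every subset of `Z` is α-embedded in `Z`. -/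
def AlphaUniversal (Z : Type*) [TopologicalSpace Z] (α : Ordinal.{0}) : Prop :=
  ∀ A : Set Z, IsAlphaEmbedded α A

/-- The projection of the product `∀ t, X t` onto the coordinates in `S`. -/
def proj {T : Type*} {X : T → Type*} (S : Set T) (x : ∀ t, X t) : ∀ t : S, X t.1 :=
  fun t => x t.1

/-- A functionally measurable (Baire) set: a member of some functionally additive or
multiplicative class `α` with `α < ω₁`. -/
def FunctionallyMeasurable {Z : Type*} [TopologicalSpace Z] (A : Set Z) : Prop :=
  ∃ (b : Bool) (β : Ordinal.{0}), β < (Cardinal.aleph 1).ord ∧ FunClass Z b β A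

/-- `Y` has a regular `Gδ`-diagonal. -/
def RegularGDeltaDiagonal (Y : Type*) [TopologicalSpace Y] : Prop :=
  ∃ G : ℕ → Set (Y × Y), (∀ n, IsOpen (G n)) ∧
    {p : Y × Y | p.1 = p.2} = ⋂ n, G n ∧
    {p : Y × Y | p.1 = p.2} = ⋂ n, closure (G n)

/-- In the definition of pseudo-ℵ₁-compactness the members are pairwise distinct; an indexed family
may repeat, but local finiteness makes the fibres of the indexing finite. -/
theorem PseudoAleph1Compact.countable_index {Z : Type*} [TopologicalSpace Z]
    (hZ : PseudoAleph1Compact Z) {ι : Type*} {V : ι → Set Z} (hopen : ∀ i, IsOpen (V i))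
    (hne : ∀ i, (V i).Nonempty) (hV : LocallyFinite V) : Countable ι := by
  have hrange : (range V).Countable :=
    hZ (range V) (forall_mem_range.2 hopen) (forall_mem_range.2 hne) hV.on_range
  have hcover : (⋃ W ∈ range V, {i | V i = W}).Countable := by
    refine hrange.biUnion ?_
    rintro W ⟨j, rfl⟩
    obtain ⟨x, hx⟩ := hne j
    refine ((hV.point_finite x).subset fun i hi => ?_).countable
    have hij : V i = V j := hi
    change x ∈ V i
    rwa [hij]
  refine countable_univ_iff.1 (hcover.mono fun i _ => ?_)
  exact mem_iUnion₂.2 ⟨V i, mem_range_self i, rfl⟩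

/-- If `E` is ℵ₀-invariant w.r.t. `a` and pseudo-ℵ₁-compact, then for every
finite nonempty `S ⊆ T` and every uncountable family of open sets meeting `E`, the family
of projections `p_S(U_i ∩ E)` is not locally finite in the subspace `p_S(E)`. -/
theorem statement0 {T : Type u} {X : T → Type v} [∀ t, TopologicalSpace (X t)]
    [∀ t, Nonempty (X t)] (a : ∀ t, X t) (E : Set (∀ t, X t))
    (hinv : ∀ x ∈ E, ∀ S : Set T, S.Finite →
      ∀ z : ∀ t, X t, (∀ t ∈ S, z t = x t) → (∀ t ∉ S, z t = a t) → z ∈ E)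
    (hE : PseudoAleph1Compact ↥E)
    (S : Set T) (hSfin : S.Finite) (hSne : S.Nonempty)
    (ι : Type w) [Uncountable ι] (U : ι → Set (∀ t, X t))
    (hUopen : ∀ i, IsOpen (U i)) (hUE : ∀ i, (U i ∩ E).Nonempty) :
    ¬ LocallyFinite (fun i : ι =>
      (Subtype.val ⁻¹' (proj S '' (U i ∩ E)) : Set ↥(proj S '' E))) := by
  intro hlf
  have hcont : Continuous (fun x : ↥E => (⟨proj S x.1, mem_image_of_mem _ x.2⟩ : ↥(proj S '' E))) :=
    Continuous.subtype_mk
      (continuous_pi fun t => (continuous_apply t.1).comp continuous_subtype_val) _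
  have hV : LocallyFinite (fun i : ι => (Subtype.val ⁻¹' U i : Set ↥E)) :=
    (hlf.preimage_continuous hcont).subset fun i x hx => ⟨x.1, ⟨hx, x.2⟩, rfl⟩
  have hcount : Countable ι := by
    refine hE.countable_index (fun i => (hUopen i).preimage continuous_subtype_val) (fun i => ?_) hV
    obtain ⟨x, hxU, hxE⟩ := hUE i
    exact ⟨⟨x, hxE⟩, hxU⟩
  exact not_countable hcount
end

section
/- Let (X_t)_{t∈T} be a family of nonempty topological spaces, X = ∏_{t∈T} X_t, a ∈ X, and let E ⊆ X be ℵ₀-invariant with respect to a. Suppose that for every finite nonempty set S ⊆ T and every uncountable family (U_i)_{i∈I} of open subsets of X with U_i ∩ E ≠ ∅ for all i ∈ I, the family (p_S(U_i ∩ E))_{i∈I} is not locally finite in the subspace p_S(E). Then E (with the subspace topology) is pseudo-ℵ₁-compact. -/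
/-!
Suppose an uncountable family of nonempty open subsets of `E` is locally finite, and shrink each
member to the trace on `E` of an open box with finite support `F U`. A form of the Δ-system lemma
(`exists_uncountable_pointFinite_off`) gives a finite set `S` of coordinates and an uncountable
subfamily in which every coordinate outside `S` lies in only finitely many supports; `S` may be
enlarged to be nonempty. By hypothesis the projections of these boxes to `S` accumulate at `p_S(x)`
for some `x ∈ E`. Then the family accumulates at `z = x^a_S ∈ E`: given a box `W` around `z` with
finite support `R`, infinitely many members contain a point `y ∈ E` with `p_S(y)` in the projection
of `W`, and for all but finitely many of them the support misses `R ∖ S`. For such a member the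
point `y^a_{S ∪ F U}` lies in `E` by invariance, in the member since it agrees with `y` on the
support, and in `W` since it agrees with `y` on `S` and with `a`, hence with `z`, on `R ∖ S`.
-/

open Set Topology

/-- If no point lies in uncountably many of the finite sets `F i`, a maximal disjoint subfamily is
uncountable: otherwise its countable union would meet only countably many `F i`. -/
lemma exists_uncountable_pairwiseDisjoint {T ι : Type*} (F : ι → Finset T) (I : Set ι)
    (hI : ¬ I.Countable) (hc : ∀ t, {i ∈ I | t ∈ F i}.Countable) :
    ∃ J ⊆ I, ¬ J.Countable ∧ J.PairwiseDisjoint F := by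
  obtain ⟨J, hJ⟩ := zorn_subset {J : Set ι | J ⊆ I ∧ J.PairwiseDisjoint F} (by
    intro c hcs hch
    refine ⟨⋃₀ c, ⟨sUnion_subset fun s hs => (hcs hs).1, ?_⟩, fun s hs => subset_sUnion_of_mem hs⟩
    exact (pairwiseDisjoint_sUnion hch.directedOn).2 fun s hs => (hcs hs).2)
  refine ⟨J, hJ.prop.1, fun hJc => hI ?_, hJ.prop.2⟩
  have hcount : (J ∪ ⋃ j ∈ J, ⋃ t ∈ (F j : Set T), {i ∈ I | t ∈ F i}).Countable :=
    hJc.union (hJc.biUnion fun j _ => (F j).countable_toSet.biUnion fun t _ => hc t)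
  refine hcount.mono fun i hi => ?_
  by_contra hn
  simp only [mem_union, mem_iUnion, not_or, not_exists] at hn
  refine hn.1 (hJ.le_of_ge (y := insert i J) ⟨insert_subset hi hJ.prop.1, ?_⟩
    (subset_insert i J) (mem_insert i J))
  refine hJ.prop.2.insert fun j hj _ => Finset.disjoint_left.2 fun t hti htj => ?_
  exact hn.2 j hj t htj ⟨hi, hti⟩

/-- The Δ-system argument for sets of bounded size, by induction on the bound: a point lying in
uncountably many of the sets is moved into the root `S`. -/
lemma exists_uncountable_pointFinite_off_of_card_le {T ι : Type*} (n : ℕ) :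
    ∀ (F : ι → Finset T) (I : Set ι), ¬ I.Countable → (∀ i ∈ I, (F i).card ≤ n) →
      ∃ S : Finset T, ∃ J ⊆ I, ¬ J.Countable ∧ ∀ t ∉ S, {i ∈ J | t ∈ F i}.Finite := by
  classical
  induction n with
  | zero =>
    intro F I hI hF
    refine ⟨∅, I, Subset.rfl, hI, fun t _ => ?_⟩
    convert Set.finite_empty
    ext i
    simp only [mem_ofPred_eq, mem_empty_iff_false, iff_false, not_and]
    intro hi
    have : F i = ∅ := Finset.card_eq_zero.1 (Nat.le_zero.1 (hF i hi))
    simp [this]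
  | succ n ih =>
    intro F I hI hF
    by_cases hc : ∀ t, {i ∈ I | t ∈ F i}.Countable
    · obtain ⟨J, hJI, hJ, hd⟩ := exists_uncountable_pairwiseDisjoint F I hI hc
      refine ⟨∅, J, hJI, hJ, fun t _ => Set.Subsingleton.finite ?_⟩
      rintro i ⟨hi, hti⟩ j ⟨hj, htj⟩
      by_contra hij
      exact Finset.disjoint_left.1 (hd hi hj hij) hti htj
    · push Not at hc
      obtain ⟨t₀, ht₀⟩ := hc
      obtain ⟨S, J, hJI, hJ, hS⟩ := ih (fun i => (F i).erase t₀) _ ht₀ (by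
        rintro i ⟨hi, hti⟩
        have := hF i hi
        rw [Finset.card_erase_of_mem hti]
        lia)
      refine ⟨insert t₀ S, J, fun i hi => (hJI hi).1, hJ, fun t ht => ?_⟩
      rw [Finset.mem_insert, not_or] at ht
      exact (hS t ht.2).subset fun i hi => ⟨hi.1, Finset.mem_erase.2 ⟨ht.1, hi.2⟩⟩

/-- A form of the Δ-system lemma: an uncountable family of finite sets has an uncountable
subfamily which is point-finite outside a finite set `S`. -/
lemma exists_uncountable_pointFinite_off {T ι : Type*} (F : ι → Finset T) [Uncountable ι] :
    ∃ S : Finset T, ∃ J : Set ι, ¬ J.Countable ∧ ∀ t ∉ S, {i ∈ J | t ∈ F i}.Finite := by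
  have : ∃ n, ¬ {i | (F i).card ≤ n}.Countable := by
    by_contra! hn
    refine not_countable_univ (α := ι) ((countable_iUnion hn).mono fun i _ => ?_)
    exact mem_iUnion.2 ⟨(F i).card, Nat.le_refl _⟩
  obtain ⟨n, hn⟩ := this
  obtain ⟨S, J, -, hJ, hS⟩ :=
    exists_uncountable_pointFinite_off_of_card_le n F _ hn fun i hi => hi
  exact ⟨S, J, hJ, hS⟩

/-- converse of statement 0: if for every finite nonempty `S ⊆ T` every
uncountable family of open sets meeting `E` projects to a family which is not locally
finite in `p_S(E)`, then the ℵ₀-invariant set `E` is pseudo-ℵ₁-compact. -/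
theorem statement1 {T : Type u} {X : T → Type v} [∀ t, TopologicalSpace (X t)]
    [∀ t, Nonempty (X t)] (a : ∀ t, X t) (E : Set (∀ t, X t))
    (hinv : ∀ x ∈ E, ∀ S : Set T, S.Finite →
      ∀ z : ∀ t, X t, (∀ t ∈ S, z t = x t) → (∀ t ∉ S, z t = a t) → z ∈ E)
    (h : ∀ S : Set T, S.Finite → S.Nonempty →
      ∀ (ι : Type (max u v)), Uncountable ι → ∀ U : ι → Set (∀ t, X t),
        (∀ i, IsOpen (U i)) → (∀ i, (U i ∩ E).Nonempty) →
        ¬ LocallyFinite (fun i : ι =>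
          (Subtype.val ⁻¹' (proj S '' (U i ∩ E)) : Set ↥(proj S '' E)))) :
    PseudoAleph1Compact ↥E := by
  classical
  intro 𝒰 hopen hne hlf
  by_contra hunc
  -- For empty `T` the space `E` has at most one point; the hypothesis needs a nonempty `S`.
  rcases isEmpty_or_nonempty T with hT | ⟨⟨t₀⟩⟩
  · exact hunc (Set.to_countable 𝒰)
  have hbox : ∀ U : 𝒰, ∃ (F : Finset T) (u : ∀ t, Set (X t)), (∀ t ∈ F, IsOpen (u t)) ∧
      ((F : Set T).pi u ∩ E).Nonempty ∧ ∀ x : E, x.1 ∈ (F : Set T).pi u → x ∈ U.1 := by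
    rintro ⟨U, hU⟩
    obtain ⟨x, hx⟩ := hne U hU
    obtain ⟨V, hV, rfl⟩ := isOpen_induced_iff.1 (hopen U hU)
    obtain ⟨F, u, hu, hsub⟩ := isOpen_pi_iff.1 hV x.1 hx
    exact ⟨F, u, fun t ht => (hu t ht).1, ⟨x.1, fun t ht => (hu t ht).2, x.2⟩,
      fun y hy => hsub hy⟩
  choose F u hu hbne hbsub using hbox
  have : Uncountable 𝒰 := not_countable_iff.1 fun hc => hunc (countable_coe_iff.1 hc)
  obtain ⟨S₀, J, hJ, hfin⟩ := exists_uncountable_pointFinite_off F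
  set S : Finset T := insert t₀ S₀ with hS
  have hnlf := h (S : Set T) S.finite_toSet ⟨t₀, by simp [hS]⟩ J 
    (not_countable_iff.1 fun hc => hJ (countable_coe_iff.1 hc))
    (fun i => (F i.1 : Set T).pi (u i.1))
    (fun i => isOpen_set_pi (F i.1).finite_toSet (hu i.1)) (fun i => hbne i.1)
  refine hnlf ?_
  rintro ⟨_, x, hxE, rfl⟩
  let z : ∀ t, X t := fun t => if t ∈ S then x t else a t
  have hzE : z ∈ E := hinv x hxE S S.finite_toSet z
    (fun t ht => if_pos ht) (fun t ht => if_neg ht)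
  obtain ⟨N, hN, hNfin⟩ := hlf ⟨z, hzE⟩
  obtain ⟨V, hV, hVN⟩ := mem_nhds_subtype E ⟨z, hzE⟩ N |>.1 hN
  obtain ⟨G, hGV, hG, hzG⟩ := mem_nhds_iff.1 hV
  obtain ⟨R, w, hw, hwsub⟩ := isOpen_pi_iff.1 hG z hzG
  -- The points of `p_S(E)` lying in the projection of the box with sides `w t`, `t ∈ R`.
  refine ⟨{q | ∀ t : (S : Set T), t.1 ∈ R → q.1 t ∈ w t.1}, ?_, ?_⟩
  · refine IsOpen.mem_nhds ?_ ?_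
    · simp only [ofPred_forall]
      refine isOpen_iInter_of_finite fun t => isOpen_iInter_of_finite fun ht => ?_
      exact (hw t.1 ht).1.preimage ((continuous_apply t).comp continuous_subtype_val)
    · intro t ht
      have := (hw t.1 ht).2
      simpa [z, if_pos (Finset.mem_coe.1 t.2), proj] using this
  · have hbad : (⋃ t ∈ (R \ S : Finset T), {i ∈ J | t ∈ F i}).Finite :=
      (R \ S).finite_toSet.biUnion fun t ht =>
        hfin t fun hmem => (Finset.mem_sdiff.1 ht).2 (Finset.mem_insert_of_mem hmem)
    refine ((hNfin.union hbad).preimage Subtype.val_injective.injOn).subset ?_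
    rintro i ⟨⟨_, _⟩, ⟨y, ⟨hyB, hyE⟩, rfl⟩, hq⟩
    by_cases hi : i.1 ∈ ⋃ t ∈ (R \ S : Finset T), {i ∈ J | t ∈ F i}
    · exact Or.inr hi
    refine Or.inl ?_
    simp only [mem_iUnion, not_exists] at hi
    let v : ∀ t, X t := fun t => if t ∈ S ∪ F i.1 then y t else a t
    have hvE : v ∈ E := hinv y hyE (S ∪ F i.1 : Finset T) (Finset.finite_toSet _) v
      (fun t ht => if_pos ht) (fun t ht => if_neg ht)
    refine ⟨⟨v, hvE⟩, hbsub i.1 _ fun t ht => ?_, hVN (hGV (hwsub fun t ht => ?_))⟩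
    · have : v t = y t := if_pos (Finset.mem_union_right _ ht)
      change v t ∈ _
      rw [this]
      exact hyB t ht
    · by_cases htS : t ∈ S
      · have : v t = y t := if_pos (Finset.mem_union_left _ htS)
        change v t ∈ _
        rw [this]
        exact hq ⟨t, htS⟩ ht
      · have htF : t ∉ F i.1 := fun htF => hi t (Finset.mem_sdiff.2 ⟨ht, htS⟩) ⟨i.2, htF⟩
        have hvt : v t = z t := by simp [v, z, htS, htF]
        change v t ∈ _
        rw [hvt]
        exact (hw t ht).2
end

section
/- There exist an index set T, a family (X_t)_{t∈T} of nonempty topological spaces with product X = ∏_{t∈T} X_t, a point a ∈ X, and a set E ⊆ X which is (ℵ₁,ℵ₁)-invariant with respect to a, such that p_S(E) is pseudo-ℵ₁-compact for every nonempty finite set S ⊆ T, but E itself (with the subspace topology) is not pseudo-ℵ₁-compact. -/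
/-!
The root of the example is a separable space with an uncountable closed discrete subset: the
particular point topology `ParticularPoint` on `ℝ`, in which a nonempty set is open iff it contains
`0`. The index set is `Option ℝ`, every factor is this space, and the base point is constantly `1`.

The set `counterSet` consists of the points `x` such that, for every real `t`, the coordinate
`x (some t)` is `1`, or it is `0` and `x none ∈ {t, 1}`. Replacing coordinates by `1` never leaves
it. On a finite set of coordinates, all but finitely many points of the projection have the form
arbitrary at `none` and `1` elsewhere, and these lie in the closure of the single point with value
`0` at `none`; so finite projections are separable, hence pseudo-ℵ₁-compact. On the other hand, for
`d ≠ 1` the open set where both `x none ≠ 1` and `x (some d) ≠ 1` is nonempty and forces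
`x none = d`. As every `y` has the neighbourhood `{x | x none ∈ {0, y none}}`, these uncountably
many sets form a locally finite family.
-/

open Set Topology

/-- The real line with the particular point topology at `0`. -/
def ParticularPoint : Type := ℝ

namespace ParticularPoint

/-- A set is open iff it is empty or contains `0`. -/
instance : TopologicalSpace ParticularPoint where
  IsOpen s := s.Nonempty → (0 : ℝ) ∈ s
  isOpen_univ := fun _ => trivial
  isOpen_inter := fun _ _ hs ht ⟨x, hx⟩ => ⟨hs ⟨x, hx.1⟩, ht ⟨x, hx.2⟩⟩
  isOpen_sUnion := fun _ h ⟨x, t, ht, hx⟩ => ⟨t, ht, h t ht ⟨x, hx⟩⟩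

theorem isOpen_of_mem {s : Set ParticularPoint} (h : (0 : ℝ) ∈ s) : IsOpen s := fun _ => h

theorem zero_specializes (y : ParticularPoint) : @Specializes ParticularPoint _ (0 : ℝ) y :=
  specializes_iff_forall_open.2 fun _ hs hy => hs ⟨y, hy⟩

end ParticularPoint

/-- Each point lies in only finitely many members of a locally finite family, so a countable dense
set meets only countably many members. -/
theorem PseudoAleph1Compact.of_countable_dense {Z : Type*} [TopologicalSpace Z] {C : Set Z}
    (hC : C.Countable) (hd : Dense C) : PseudoAleph1Compact Z := by
  intro 𝒰 ho hne hlf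
  have hcov : 𝒰 ⊆ ⋃ c ∈ C, (fun U : 𝒰 => (U : Set Z)) '' {U : 𝒰 | c ∈ (U : Set Z)} := by
    intro U hU
    obtain ⟨c, hcU, hcC⟩ := hd.inter_open_nonempty U (ho U hU) (hne U hU)
    exact mem_iUnion₂.2 ⟨c, hcC, ⟨U, hU⟩, hcU, rfl⟩
  exact (hC.biUnion fun c _ => ((hlf.point_finite c).image _).countable).mono hcov

/-- The counterexample: a coordinate `x (some t)` may differ from `1` only by being `0`, and only
if `x none` is `t` or `1`. -/
def counterSet : Set (Option ℝ → ParticularPoint) :=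
  {x | ∀ t : ℝ, x (some t) = (1 : ℝ) ∨
    (x (some t) = (0 : ℝ) ∧ (x none = t ∨ x none = (1 : ℝ)))}

theorem counterSet_invariant (x : Option ℝ → ParticularPoint) (hx : x ∈ counterSet)
    (S : Set (Option ℝ)) (z : Option ℝ → ParticularPoint)
    (h1 : ∀ t ∈ S, z t = x t) (h2 : ∀ t ∉ S, z t = (1 : ℝ)) : z ∈ counterSet := by
  intro t
  by_cases ht : some t ∈ S
  · rw [h1 _ ht]
    refine (hx t).imp id fun h => ⟨h.1, ?_⟩
    by_cases hn : none ∈ S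
    · rw [h1 _ hn]; exact h.2
    · exact Or.inr (h2 _ hn)
  · exact Or.inl (h2 _ ht)

theorem counterSet_proj (S : Set (Option ℝ)) (hS : S.Finite) :
    PseudoAleph1Compact ↥(proj S '' counterSet) := by
  let F : Set ParticularPoint := {(0 : ℝ), (1 : ℝ)} ∪ {r : ℝ | some r ∈ S}
  have hF : F.Finite := by
    refine ((finite_singleton _).insert _).union ?_
    exact hS.preimage (Option.some_injective ℝ).injOn
  have h0 : F.Mem (0 : ℝ) := Or.inl (Or.inl rfl)
  have h1 : F.Mem (1 : ℝ) := Or.inl (Or.inr rfl)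
  have : Finite S := hS
  -- The finitely many points with all coordinates in `F` are dense in the projection.
  let C : Set ↥(proj S '' counterSet) := {z | ∀ t, z.1 t ∈ F}
  have hC : C.Finite := by
    have hpi : (Set.pi univ fun _ : S => F).Finite := Set.Finite.pi fun _ => hF
    exact (hpi.preimage Subtype.val_injective.injOn).subset fun z hz t _ => hz t
  refine PseudoAleph1Compact.of_countable_dense hC.countable ?_
  rintro ⟨_, x, hx, rfl⟩
  by_cases hxn : x none ∈ F
  · refine subset_closure ?_
    rintro ⟨t, ht⟩
    rcases t with _ | t
    · exact hxn
    · rcases hx t with h | h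
      · change x (some t) ∈ F
        rw [h]; exact h1
      · change x (some t) ∈ F
        rw [h.1]; exact h0
  · let w : Option ℝ → ParticularPoint := fun t => t.elim (0 : ℝ) fun _ => (1 : ℝ)
    have hw : w ∈ counterSet := fun t => Or.inl rfl
    let w' : ↥(proj S '' counterSet) := ⟨proj S w, w, hw, rfl⟩
    have hwC : w' ∈ C := by
      rintro ⟨t, ht⟩
      rcases t with _ | t
      · exact h0
      · exact h1
    have hsp : w' ⤳ ⟨proj S x, x, hx, rfl⟩ := by
      rw [subtype_specializes_iff, specializes_pi]
      rintro ⟨t, ht⟩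
      rcases t with _ | t
      · exact ParticularPoint.zero_specializes _
      · have hxt : x (some t) = (1 : ℝ) := by
          rcases hx t with h | ⟨-, h | h⟩
          · exact h
          · exact absurd (by rw [h]; exact Or.inr ht) hxn
          · exact absurd (by rw [h]; exact h1) hxn
        exact specializes_of_eq hxt.symm
    exact closure_mono (singleton_subset_iff.2 hwC) hsp.mem_closure

/-- The open subset of `counterSet` where neither `x none` nor `x (some d)` is `1`. -/
def counterOpen (d : ℝ) : Set ↥counterSet :=
  {x | x.1 none ≠ (1 : ℝ) ∧ x.1 (some d) ≠ (1 : ℝ)}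

theorem eq_of_mem_counterOpen {d : ℝ} {x : ↥counterSet} (h : x ∈ counterOpen d) :
    x.1 none = d := by
  rcases x.2 d with h' | ⟨-, h' | h'⟩
  · exact absurd h' h.2
  · exact h'
  · exact absurd h' h.1

theorem isOpen_counterOpen (d : ℝ) : IsOpen (counterOpen d) := by
  have ho : IsOpen {y : ParticularPoint | y ≠ (1 : ℝ)} :=
    ParticularPoint.isOpen_of_mem (zero_ne_one (α := ℝ))
  have hc : ∀ t, Continuous fun x : ↥counterSet => x.1 t := fun t =>
    (continuous_apply t).comp continuous_subtype_val
  exact (ho.preimage (hc none)).inter (ho.preimage (hc (some d)))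

theorem counterOpen_nonempty {d : ℝ} (hd : d ≠ 1) : (counterOpen d).Nonempty := by
  classical
  let x : Option ℝ → ParticularPoint := fun t =>
    t.elim d fun s => if s = d then (0 : ℝ) else (1 : ℝ)
  have hx : x ∈ counterSet := by
    intro t
    by_cases h : t = d
    · exact Or.inr ⟨if_pos h, Or.inl h.symm⟩
    · exact Or.inl (if_neg h)
  refine ⟨⟨x, hx⟩, hd, ?_⟩
  change (if d = d then (0 : ℝ) else (1 : ℝ)) ≠ (1 : ℝ)
  simp

theorem counterSet_not_pseudoAleph1Compact : ¬ PseudoAleph1Compact ↥counterSet := by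
  intro h
  have hcount := h (counterOpen '' {d | d ≠ 1})
    (by rintro _ ⟨d, -, rfl⟩; exact isOpen_counterOpen d)
    (by rintro _ ⟨d, hd, rfl⟩; exact counterOpen_nonempty hd)
    (by
      intro y
      have ho : IsOpen {z : ParticularPoint | z = (0 : ℝ) ∨ z = y.1 none} :=
        ParticularPoint.isOpen_of_mem (Or.inl rfl)
      have hc : Continuous fun x : ↥counterSet => x.1 none :=
        (continuous_apply none).comp continuous_subtype_val
      refine ⟨_, (ho.preimage hc).mem_nhds (Or.inr rfl), ?_⟩
      -- Only the members indexed by `0` and by `y none` can meet this neighbourhood.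
      have hfin : ({counterOpen (0 : ℝ), counterOpen (y.1 none)} : Set (Set ↥counterSet)).Finite :=
        (finite_singleton _).insert _
      refine (hfin.preimage Subtype.val_injective.injOn).subset ?_
      rintro ⟨_, d, hd, rfl⟩ ⟨x, hxd, hx⟩
      have hxd' : x.1 none = d := eq_of_mem_counterOpen hxd
      rcases hx with hx | hx
      · exact Or.inl (congrArg counterOpen (hxd'.symm.trans hx))
      · exact Or.inr (congrArg counterOpen (hxd'.symm.trans hx)))
  have hinj : InjOn counterOpen {d : ℝ | d ≠ 1} := by
    intro d hd e _ hde
    obtain ⟨x, hx⟩ := counterOpen_nonempty hd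
    have hx' : x ∈ counterOpen e := hde ▸ hx
    exact (eq_of_mem_counterOpen hx).symm.trans (eq_of_mem_counterOpen hx')
  have hne : {d : ℝ | d ≠ 1}.Countable := countable_of_injective_of_countable_image hinj hcount
  refine Cardinal.not_countable_real ((hne.union (countable_singleton 1)).mono ?_)
  intro d _
  exact (em (d = 1)).symm

/-- there is an (ℵ₁,ℵ₁)-invariant set `E` in a product all of whose
projections onto finite nonempty sets of coordinates are pseudo-ℵ₁-compact, while `E`
itself is not pseudo-ℵ₁-compact. -/
theorem statement2 : ∃ (T : Type) (X : T → Type) (τ : ∀ t, TopologicalSpace (X t))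
    (_ : ∀ t, Nonempty (X t)) (a : ∀ t, X t) (E : Set (∀ t, X t)),
    letI : ∀ t, TopologicalSpace (X t) := τ
    (∀ x ∈ E, ∀ S : Set T, (S.Countable ∨ Sᶜ.Countable) →
      ∀ z : ∀ t, X t, (∀ t ∈ S, z t = x t) → (∀ t ∉ S, z t = a t) → z ∈ E) ∧
    (∀ S : Set T, S.Finite → S.Nonempty → PseudoAleph1Compact ↥(proj S '' E)) ∧
    ¬ PseudoAleph1Compact ↥E := by
  exact ⟨Option ℝ, fun _ => ParticularPoint, fun _ => inferInstance,
    fun _ => ⟨(0 : ℝ)⟩, fun _ => (1 : ℝ), counterSet,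
    fun x hx S _ z h1 h2 => counterSet_invariant x hx S z h1 h2,
    fun S hS _ => counterSet_proj S hS, counterSet_not_pseudoAleph1Compact⟩
end

section
/- If a topological space Z admits an uncountable locally finite family of nonempty open subsets, then Z admits an uncountable family of pairwise disjoint nonempty open subsets. -/
/-!
By Zorn's lemma there is a maximal family `𝒲` of pairwise disjoint nonempty open sets, each of
which meets only finitely many members of the locally finite family `V`. If `𝒲` were countable,
only countably many `V i` would meet some member of `𝒲`, so some `V i` would be disjoint from all
of them. Intersecting this `V i` with an open neighborhood of one of its points that meets only
finitely many members of `V` gives a set extending `𝒲`, contradicting maximality.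
-/

open Set Topology

/-- a space admitting an uncountable locally finite family of nonempty open
sets admits an uncountable family of pairwise disjoint nonempty open sets. -/
theorem statement5 {Z : Type u} [TopologicalSpace Z] {ι : Type v} [Uncountable ι]
    (V : ι → Set Z) (hopen : ∀ i, IsOpen (V i)) (hne : ∀ i, (V i).Nonempty)
    (hlf : LocallyFinite V) :
    ∃ 𝒲 : Set (Set Z), ¬ 𝒲.Countable ∧ (∀ W ∈ 𝒲, IsOpen W ∧ W.Nonempty) ∧
      𝒲.Pairwise Disjoint := by
  classical
  -- The poset of disjoint families of nonempty open sets each meeting finitely many `V i`.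
  obtain ⟨𝒲, hmax⟩ := zorn_subset
    {𝒲 : Set (Set Z) | (∀ W ∈ 𝒲, IsOpen W ∧ W.Nonempty ∧ {i | (V i ∩ W).Nonempty}.Finite) ∧
      𝒲.Pairwise Disjoint} (by
    intro c hc hchain
    refine ⟨⋃₀ c, ⟨?_, ?_⟩, fun s hs => subset_sUnion_of_mem hs⟩
    · rintro W ⟨s, hs, hW⟩
      exact (hc hs).1 W hW
    · exact (pairwise_sUnion hchain.directedOn).2 fun s hs => (hc hs).2)
  obtain ⟨hW, hdisj⟩ := hmax.prop
  refine ⟨𝒲, fun hcount => ?_, fun W h => ⟨(hW W h).1, (hW W h).2.1⟩, hdisj⟩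
  have hI : (⋃ W ∈ 𝒲, {i | (V i ∩ W).Nonempty}).Countable :=
    hcount.biUnion fun W h => (hW W h).2.2.countable
  obtain ⟨i, hi⟩ : ∃ i, i ∉ ⋃ W ∈ 𝒲, {i | (V i ∩ W).Nonempty} := by
    by_contra! hall
    exact not_countable_univ (hI.mono fun i _ => hall i)
  have hi' : ∀ W ∈ 𝒲, Disjoint (V i) W := by
    intro W h
    rw [disjoint_iff_inter_eq_empty, ← not_nonempty_iff_eq_empty]
    exact fun hn => hi (mem_biUnion h hn)
  obtain ⟨x, hx⟩ := hne i
  obtain ⟨t, ht, hfin⟩ := hlf x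
  obtain ⟨N, hNt, hNo, hxN⟩ := mem_nhds_iff.1 ht
  -- `V i ∩ N` can be added to `𝒲`, so by maximality it already belongs to `𝒲`.
  have hmem : V i ∩ N ∈ 𝒲 := by
    refine hmax.le_of_ge (y := insert (V i ∩ N) 𝒲) ⟨?_, ?_⟩ (subset_insert _ _) (mem_insert _ _)
    · rintro W (rfl | h)
      · exact ⟨(hopen i).inter hNo, ⟨x, hx, hxN⟩, hfin.subset fun j hj =>
          hj.mono (inter_subset_inter_right _ (inter_subset_right.trans hNt))⟩
      · exact hW W h
    · refine hdisj.insert fun W h _ => ?_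
      have hd := (hi' W h).mono_left (inter_subset_left (t := N))
      exact ⟨hd, hd.symm⟩
  exact disjoint_left.1 (hi' _ hmem) hx ⟨hx, hxN⟩
end

section
/- Let (X_t)_{t∈T} be a family of nonempty topological spaces, X = ∏_{t∈T} X_t, and let E ⊆ X be a set such that for every continuous function f : E → ℝ there exist an at most countable set T₀ ⊆ T and a continuous mapping f₀ : p_{T₀}(E) → ℝ with f = f₀ ∘ (p_{T₀}|_E). Then for every set A which is functionally open in the subspace E there exists an at most countable set T₀ ⊆ T such that A depends on T₀ and p_{T₀}(A) is functionally open in the subspace p_{T₀}(E). -/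
/-!
Write `A` as the set where a continuous `f : E → ℝ` is nonzero, and factor `f = f₀ ∘ proj T₀` with
`T₀` countable. Then membership in `A` is decided by `f₀ (proj T₀ x) ≠ 0`, so `A` depends on `T₀`,
and the same `f₀` witnesses that the image of `A` under `proj T₀` is functionally open.
-/

open Set Topology

/-- if every continuous real function on `E ⊆ ∏ t, X t` factors continuously
through a projection onto countably many coordinates, then every functionally open subset
`A` of the subspace `E` depends on some countable `T₀ ⊆ T` and its projection is
functionally open in `p_{T₀}(E)`. -/
theorem statement7 {T : Type u} {X : T → Type v} [∀ t, TopologicalSpace (X t)]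
    [∀ t, Nonempty (X t)] (E : Set (∀ t, X t))
    (hfac : ∀ f : ↥E → ℝ, Continuous f →
      ∃ T₀ : Set T, T₀.Countable ∧
        ∃ f₀ : ↥(proj T₀ '' E) → ℝ, Continuous f₀ ∧
          ∀ x : ↥E, f x = f₀ ⟨proj T₀ x.1, ⟨x.1, x.2, rfl⟩⟩)
    (A : Set (∀ t, X t)) (hAE : A ⊆ E)
    (hA : FunctionallyOpen (Subtype.val ⁻¹' A : Set ↥E)) :
    ∃ T₀ : Set T, T₀.Countable ∧
      (∀ x ∈ A, ∀ y ∈ E, proj T₀ x = proj T₀ y → y ∈ A) ∧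
      FunctionallyOpen (Subtype.val ⁻¹' (proj T₀ '' A) : Set ↥(proj T₀ '' E)) := by
  obtain ⟨f, hf, hfA⟩ := hA
  obtain ⟨T₀, hT₀, f₀, hf₀, hff₀⟩ := hfac f hf
  have hmem : ∀ x : ↥E, x.1 ∈ A ↔ f x ≠ 0 := fun x =>
    (not_iff_comm.1 (show x.1 ∉ A ↔ f x = 0 from Set.ext_iff.1 hfA x)).symm
  have hdep : ∀ x ∈ A, ∀ y ∈ E, proj T₀ x = proj T₀ y → y ∈ A := by
    intro x hx y hy hxy
    have hfx := (hmem ⟨x, hAE hx⟩).1 hx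
    refine (hmem ⟨y, hy⟩).2 ?_
    rw [hff₀] at hfx ⊢
    simpa only [hxy] using hfx
  refine ⟨T₀, hT₀, hdep, f₀, hf₀, ?_⟩
  ext ⟨z, x, hx, rfl⟩
  -- by dependence on `T₀`, the projection of `x` lies in the image of `A` only if `x ∈ A`
  have himage : proj T₀ x ∈ proj T₀ '' A ↔ x ∈ A :=
    ⟨fun ⟨a, ha, hax⟩ => hdep a ha x hx hax, fun h => ⟨x, h, rfl⟩⟩
  have hzero := hmem ⟨x, hx⟩
  rw [hff₀] at hzero
  simp only [mem_compl_iff, mem_preimage, mem_singleton_iff, himage]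
  exact (not_congr hzero).trans not_not
end

section
/- Let 0 ≤ α < ω₁, let (X_t)_{t∈T} be a family of nonempty topological spaces, X = ∏_{t∈T} X_t, and let E ⊆ X be a set such that for every continuous function f : E → ℝ there exist an at most countable set T₀ ⊆ T and a continuous mapping f₀ : p_{T₀}(E) → ℝ with f = f₀ ∘ (p_{T₀}|_E). Then for every set A of the functionally additive (respectively, functionally multiplicative) class α in the subspace E there exists an at most countable set T₀ ⊆ T such that A depends on T₀ and p_{T₀}(A) is of the functionally additive (respectively, functionally multiplicative) class α in the subspace p_{T₀}(E). -/
/-! The statement is equivalent to its version upstairs: a set of class `α` in `E` is the preimage,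
under the restricted projection `E → p_S(E)` for some countable `S`, of a set of the same class `α`
in `p_S(E)` (`FunClass.exists_countable_proj`). This goes by induction on the class. For zero sets
it is the factorization hypothesis on continuous functions. For countable unions and intersections,
each member `A n` is a preimage from its own countable `S n`; all of these are preimages from the
countable union `⋃ n, S n`, since the restrictions `p_{⋃ n, S n}(E) → p_{S n}(E)` are continuous
and continuous preimages preserve the classes (`FunClass.preimage`). Surjectivity of
`E → p_S(E)` then identifies the set downstairs with the projection of `A`. -/

open Set Topology

theorem FunctionallyClosed.preimage {Y Z : Type*} [TopologicalSpace Y] [TopologicalSpace Z]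
    {g : Y → Z} (hg : Continuous g) {A : Set Z} (hA : FunctionallyClosed A) :
    FunctionallyClosed (g ⁻¹' A) := by
  obtain ⟨f, hf, rfl⟩ := hA
  exact ⟨f ∘ g, hf.comp hg, rfl⟩

theorem FunClass.preimage {Y Z : Type*} [TopologicalSpace Y] [TopologicalSpace Z]
    {g : Y → Z} (hg : Continuous g) {b : Bool} {α : Ordinal.{0}} {A : Set Z}
    (hA : FunClass Z b α A) : FunClass Y b α (g ⁻¹' A) := by
  induction hA with
  | open_ A h => exact .open_ _ (FunctionallyClosed.preimage hg h)
  | closed_ A h => exact .closed_ _ (h.preimage hg)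
  | union α A β hα hβ _ ih =>
    rw [preimage_iUnion]
    exact .union α _ β hα hβ ih
  | inter α A β hα hβ _ ih =>
    rw [preimage_iInter]
    exact .inter α _ β hα hβ ih

/-- The projection `p_S` restricted to `E`, with codomain the subspace `p_S(E)`. -/
def projOn {T : Type*} {X : T → Type*} (E : Set (∀ t, X t)) (S : Set T) (x : ↥E) :
    ↥(proj S '' E) :=
  ⟨proj S x.1, x.1, x.2, rfl⟩

/-- For `S ⊆ S'`, the restriction of coordinates `p_{S'}(E) → p_S(E)`. -/
def restrictOn {T : Type*} {X : T → Type*} (E : Set (∀ t, X t)) {S S' : Set T} (h : S ⊆ S')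
    (z : ↥(proj S' '' E)) : ↥(proj S '' E) :=
  ⟨fun t => z.1 ⟨t.1, h t.2⟩, by
    obtain ⟨_, x, hx, rfl⟩ := z
    exact ⟨x, hx, rfl⟩⟩

theorem continuous_restrictOn {T : Type*} {X : T → Type*} [∀ t, TopologicalSpace (X t)]
    (E : Set (∀ t, X t)) {S S' : Set T} (h : S ⊆ S') : Continuous (restrictOn E h) :=
  Continuous.subtype_mk
    (continuous_pi fun t => (continuous_apply (⟨t.1, h t.2⟩ : S')).comp continuous_subtype_val) _

/-- Every set of a given class in `E` is the preimage of a set of the same class in `p_S(E)`, for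
some countable `S`. -/
theorem FunClass.exists_countable_proj {T : Type*} {X : T → Type*} [∀ t, TopologicalSpace (X t)]
    (E : Set (∀ t, X t))
    (hfac : ∀ f : ↥E → ℝ, Continuous f →
      ∃ S : Set T, S.Countable ∧
        ∃ f₀ : ↥(proj S '' E) → ℝ, Continuous f₀ ∧ ∀ x : ↥E, f x = f₀ (projOn E S x))
    {b : Bool} {α : Ordinal.{0}} {B : Set ↥E} (hB : FunClass ↥E b α B) :
    ∃ S : Set T, S.Countable ∧
      ∃ C : Set ↥(proj S '' E), FunClass _ b α C ∧ B = projOn E S ⁻¹' C := by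
  have closed_case : ∀ B : Set ↥E, FunctionallyClosed B → ∃ S : Set T, S.Countable ∧
      ∃ C : Set ↥(proj S '' E), FunctionallyClosed C ∧ B = projOn E S ⁻¹' C := by
    rintro _ ⟨f, hf, rfl⟩
    obtain ⟨S, hS, f₀, hf₀, hff₀⟩ := hfac f hf
    refine ⟨S, hS, f₀ ⁻¹' {0}, ⟨f₀, hf₀, rfl⟩, ?_⟩
    ext x
    simp [hff₀]
  induction hB with
  | open_ A h =>
    obtain ⟨S, hS, C, hC, hAC⟩ := closed_case _ h
    refine ⟨S, hS, Cᶜ, .open_ _ ?_, ?_⟩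
    · rwa [FunctionallyOpen, compl_compl]
    · rw [preimage_compl, ← hAC, compl_compl]
  | closed_ A h =>
    obtain ⟨S, hS, C, hC, hAC⟩ := closed_case _ h
    exact ⟨S, hS, C, .closed_ _ hC, hAC⟩
  | union α A β hα hβ _ ih =>
    choose S hS C hC hAC using ih
    refine ⟨⋃ n, S n, countable_iUnion hS,
      ⋃ n, restrictOn E (subset_iUnion S n) ⁻¹' C n,
      .union α _ β hα hβ fun n => (hC n).preimage (continuous_restrictOn E _), ?_⟩
    rw [preimage_iUnion]
    exact iUnion_congr hAC
  | inter α A β hα hβ _ ih =>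
    choose S hS C hC hAC using ih
    refine ⟨⋃ n, S n, countable_iUnion hS,
      ⋂ n, restrictOn E (subset_iUnion S n) ⁻¹' C n,
      .inter α _ β hα hβ fun n => (hC n).preimage (continuous_restrictOn E _), ?_⟩
    rw [preimage_iInter]
    exact iInter_congr hAC

/-- if every continuous real function on `E ⊆ ∏ t, X t` factors continuously
through a projection onto countably many coordinates, then for `α < ω₁` every subset `A`
of the functionally additive (`b = true`), resp. multiplicative (`b = false`), class `α`
in the subspace `E` depends on some countable `T₀ ⊆ T` and its projection is of the same
class `α` in `p_{T₀}(E)`. -/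
theorem statement8 {T : Type u} {X : T → Type v} [∀ t, TopologicalSpace (X t)]
    [∀ t, Nonempty (X t)] (E : Set (∀ t, X t))
    (hfac : ∀ f : ↥E → ℝ, Continuous f →
      ∃ T₀ : Set T, T₀.Countable ∧
        ∃ f₀ : ↥(proj T₀ '' E) → ℝ, Continuous f₀ ∧
          ∀ x : ↥E, f x = f₀ ⟨proj T₀ x.1, ⟨x.1, x.2, rfl⟩⟩)
    (α : Ordinal.{0}) (hα : α < (Cardinal.aleph 1).ord) (b : Bool)
    (A : Set (∀ t, X t)) (hAE : A ⊆ E)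
    (hA : FunClass ↥E b α (Subtype.val ⁻¹' A)) :
    ∃ T₀ : Set T, T₀.Countable ∧
      (∀ x ∈ A, ∀ y ∈ E, proj T₀ x = proj T₀ y → y ∈ A) ∧
      FunClass ↥(proj T₀ '' E) b α (Subtype.val ⁻¹' (proj T₀ '' A)) := by
  obtain ⟨S, hS, C, hC, hAC⟩ := hA.exists_countable_proj E hfac
  have mem_iff : ∀ x (hx : x ∈ E), x ∈ A ↔ projOn E S ⟨x, hx⟩ ∈ C := fun x hx =>
    Set.ext_iff.mp hAC ⟨x, hx⟩
  have dep : ∀ x ∈ A, ∀ y ∈ E, proj S x = proj S y → y ∈ A := by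
    intro x hx y hy hxy
    have hxy' : projOn E S ⟨x, hAE hx⟩ = projOn E S ⟨y, hy⟩ := Subtype.ext hxy
    rw [mem_iff y hy, ← hxy']
    exact (mem_iff x (hAE hx)).mp hx
  refine ⟨S, hS, dep, ?_⟩
  convert hC using 1
  ext ⟨_, x, hx, rfl⟩
  constructor
  · rintro ⟨y, hy, hyx⟩
    exact (mem_iff x hx).mp (dep y hy x hx hyx)
  · intro h
    exact ⟨x, (mem_iff x hx).mpr h, rfl⟩
end

section
/- Let (X_t)_{t∈T} be a family of nonempty separable metrizable topological spaces and X = ∏_{t∈T} X_t. Then every functionally measurable subset of X is α-embedded in X for every 0 ≤ α < ω₁. -/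
/-!
Both kinds of sets involved live on countably many coordinates. If `E` is determined by countably
many coordinates, then so is every continuous `f : E → ℝ` (`exists_countable_determining`): close
a countable coordinate set `S` off under the following step. Choose a countable `D ⊆ E` whose
projection to `∏_{t ∈ S} X t` is dense in the projection of `E`, and add to `S`, for each `d ∈ D`,
a countable set of coordinates that determines the value `f d`. For the resulting set `S'`, points
`x, y ∈ E` that agree on `S'` can both be approximated by modifications, outside `S'`, of a common
`d`, so `f x = f y`.

With `E` the whole product, this shows that functionally measurable sets are determined by
countably many coordinates. With `E` such a set and `B = f⁻¹(0) ⊆ E`, the preimage of the closure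
of the projection of `B` to the metrizable space `∏_{t ∈ S'} X t` is a functionally closed set whose
trace on `E` is `B` (`exists_functionallyClosed_trace`). This is the case `α = 0`, and the general
case follows by induction on the class.
-/

open Set Topology

/-! ### Sets determined by a set of coordinates -/

/-- `E` is determined by the coordinates in `S`. -/
def DeterminedBy {T : Type*} {X : T → Type*} (E : Set (∀ t, X t)) (S : Set T) : Prop :=
  ∀ x y : ∀ t, X t, (∀ t ∈ S, x t = y t) → x ∈ E → y ∈ E

lemma DeterminedBy.mono {T : Type*} {X : T → Type*} {E : Set (∀ t, X t)}
    {S S' : Set T} (h : DeterminedBy E S) (hSS' : S ⊆ S') : DeterminedBy E S' :=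
  fun x y hxy => h x y fun t ht => hxy t (hSS' ht)

lemma DeterminedBy.compl {T : Type*} {X : T → Type*} {E : Set (∀ t, X t)}
    {S : Set T} (h : DeterminedBy E S) : DeterminedBy Eᶜ S :=
  fun x y hxy hx hy => hx (h y x (fun t ht => (hxy t ht).symm) hy)

/-! ### Continuous functions depend on countably many coordinates -/

lemma exists_basic_nhd {T : Type*} {X : T → Type*} [∀ t, TopologicalSpace (X t)]
    {E : Set (∀ t, X t)} {f : (∀ t, X t) → ℝ} (hf : ContinuousOn f E)
    {x : ∀ t, X t} (hx : x ∈ E) {ε : ℝ} (hε : 0 < ε) :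
    ∃ (F : Finset T) (U : ∀ t, Set (X t)), (∀ t ∈ F, IsOpen (U t) ∧ x t ∈ U t) ∧
      ∀ y ∈ E, (∀ t ∈ F, y t ∈ U t) → |f y - f x| < ε := by
  have h : f ⁻¹' Metric.ball (f x) ε ∈ 𝓝[E] x := hf x hx (Metric.ball_mem_nhds _ hε)
  obtain ⟨V, hV, hxV, hVE⟩ := mem_nhdsWithin.1 h
  obtain ⟨F, U, hU, hUV⟩ := isOpen_pi_iff.1 hV x hxV
  refine ⟨F, U, hU, fun y hy hyU => ?_⟩
  have : y ∈ f ⁻¹' Metric.ball (f x) ε := hVE ⟨hUV (fun t ht => hyU t ht), hy⟩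
  simpa [Real.dist_eq] using this

/-- Each single value of a continuous function is determined by countably many coordinates. -/
lemma exists_countable_support {T : Type*} {X : T → Type*} [∀ t, TopologicalSpace (X t)]
    {E : Set (∀ t, X t)} {f : (∀ t, X t) → ℝ} (hf : ContinuousOn f E)
    (x : ∀ t, X t) :
    ∃ A : Set T, A.Countable ∧ (x ∈ E → ∀ y ∈ E, (∀ t ∈ A, y t = x t) → f y = f x) := by
  by_cases hx : x ∈ E
  swap
  · exact ⟨∅, countable_empty, fun h => absurd h hx⟩
  choose F U hU hF using fun n : ℕ =>
    exists_basic_nhd hf hx (ε := 1 / ((n : ℝ) + 1)) (by positivity)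
  refine ⟨⋃ n, (F n : Set T), countable_iUnion fun n => (F n).countable_toSet,
    fun _ y hy hyx => ?_⟩
  by_contra hne
  obtain ⟨n, hn⟩ := exists_nat_one_div_lt (abs_pos.2 (sub_ne_zero.2 hne))
  refine lt_asymm hn (hF n y hy fun t ht => ?_)
  rw [hyx t (mem_iUnion.2 ⟨n, ht⟩)]
  exact (hU n t ht).2

lemma FunctionallyClosed.of_isClosed {Y : Type*} [TopologicalSpace Y]
    [TopologicalSpace.MetrizableSpace Y] {C : Set Y} (hC : IsClosed C) :
    FunctionallyClosed C := by
  let := TopologicalSpace.metrizableSpaceMetric Y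
  rcases C.eq_empty_or_nonempty with rfl | hne
  · exact ⟨fun _ => 1, continuous_const, by ext; simp⟩
  · refine ⟨fun y => Metric.infDist y C, Metric.continuous_infDist_pt C, ?_⟩
    ext y
    exact hC.mem_iff_infDist_zero hne

section Product

variable {T : Type*} {X : T → Type*} [∀ t, TopologicalSpace (X t)]
    [∀ t, TopologicalSpace.SeparableSpace (X t)] [∀ t, TopologicalSpace.MetrizableSpace (X t)]

lemma secondCountable_factor (t : T) : SecondCountableTopology (X t) := by
  let := TopologicalSpace.metrizableSpaceMetric (X t)
  exact UniformSpace.secondCountable_of_separable (X t)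

/-- There is a countable subset of `E` whose projection to countably many coordinates is dense in
the projection of `E`; density is spelled out through basic open sets, with only the coordinates
`t ∈ F ∩ S` constrained. -/
lemma exists_countable_proj_dense (E : Set (∀ t, X t)) (S : Set T) (hS : S.Countable) :
    ∃ D : Set (∀ t, X t), D.Countable ∧ D ⊆ E ∧
      ∀ x ∈ E, ∀ (F : Finset T) (U : ∀ t, Set (X t)),
        (∀ t ∈ F, t ∈ S → IsOpen (U t) ∧ x t ∈ U t) →
        ∃ d ∈ D, ∀ t ∈ F, t ∈ S → d t ∈ U t := by
  classical
  have := hS.to_subtype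
  have : ∀ t, SecondCountableTopology (X t) := secondCountable_factor
  obtain ⟨Q, hQ, hQd⟩ := TopologicalSpace.exists_countable_dense (proj (X := X) S '' E)
  choose g hgE hg using fun v : (proj (X := X) S '' E) => v.2
  refine ⟨g '' Q, hQ.image g, ?_, fun x hx F U hU => ?_⟩
  · rintro _ ⟨v, -, rfl⟩
    exact hgE v
  let V : Set (∀ t : S, X t.1) := ⋂ t ∈ F.subtype (· ∈ S), (fun v => v t) ⁻¹' U t.1
  have hV : IsOpen V := by
    refine isOpen_biInter_finset fun t ht => ?_
    exact (hU t.1 (Finset.mem_subtype.1 ht) t.2).1.preimage (continuous_apply t)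
  obtain ⟨q, hqV, hqQ⟩ := hQd.inter_open_nonempty (Subtype.val ⁻¹' V)
    (hV.preimage continuous_subtype_val) ⟨⟨proj S x, x, hx, rfl⟩, by
      simp only [V, mem_preimage, mem_iInter]
      exact fun t ht => (hU t.1 (Finset.mem_subtype.1 ht) t.2).2⟩
  refine ⟨g q, ⟨q, hqQ, rfl⟩, fun t ht htS => ?_⟩
  have h1 := mem_iInter₂.1 hqV ⟨t, htS⟩ (Finset.mem_subtype.2 ht)
  rw [← hg q] at h1
  exact h1

/-- A continuous real function on a set determined by countably many coordinates is itself
determined by countably many coordinates. -/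
lemma exists_countable_determining {E : Set (∀ t, X t)} {S : Set T} (hS : S.Countable)
    (hES : DeterminedBy E S) {f : (∀ t, X t) → ℝ} (hf : ContinuousOn f E) :
    ∃ S' : Set T, S ⊆ S' ∧ S'.Countable ∧
      ∀ x ∈ E, ∀ y ∈ E, (∀ t ∈ S', x t = y t) → f x = f y := by
  classical
  choose A hAc hA using fun x => exists_countable_support hf x
  choose! D hDc hDE hD using fun R (hR : R.Countable) => exists_countable_proj_dense E R hR
  let R : ℕ → Set T := fun n => Nat.rec S (fun _ P => P ∪ ⋃ d ∈ D P, A d) n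
  have hR1 : ∀ n, R (n + 1) = R n ∪ ⋃ d ∈ D (R n), A d := fun n => rfl
  have hRc : ∀ n, (R n).Countable := by
    intro n
    induction n with
    | zero => exact hS
    | succ n ih => rw [hR1]; exact ih.union ((hDc _ ih).biUnion fun d _ => hAc d)
  have hRm : Monotone R := monotone_nat_of_le_succ fun n => by
    rw [hR1]; exact subset_union_left
  have hSR : S ⊆ ⋃ n, R n := subset_iUnion R 0
  have key : ∀ (F : Finset T), ∃ n, ∀ t ∈ F, t ∈ ⋃ n, R n → t ∈ R n := by
    intro F
    induction F using Finset.induction_on with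
    | empty => exact ⟨0, by simp⟩
    | insert a F _ ih =>
      obtain ⟨n, hn⟩ := ih
      by_cases ha : a ∈ ⋃ n, R n
      · obtain ⟨m, hm⟩ := mem_iUnion.1 ha
        refine ⟨max n m, fun t ht htR => ?_⟩
        rcases Finset.mem_insert.1 ht with rfl | ht
        · exact hRm (le_max_right _ _) hm
        · exact hRm (le_max_left _ _) (hn t ht htR)
      · refine ⟨n, fun t ht htR => ?_⟩
        rcases Finset.mem_insert.1 ht with rfl | ht
        · exact absurd htR ha
        · exact hn t ht htR
  refine ⟨⋃ n, R n, hSR, countable_iUnion hRc, fun x hx y hy hxy => ?_⟩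
  by_contra hne
  have hε : 0 < |f x - f y| / 2 := by
    have := abs_pos.2 (sub_ne_zero.2 hne)
    positivity
  obtain ⟨F, U, hU, hF⟩ := exists_basic_nhd hf hx hε
  obtain ⟨G, V, hV, hG⟩ := exists_basic_nhd hf hy hε
  obtain ⟨n, hn⟩ := key (F ∪ G)
  obtain ⟨d, hdD, hd⟩ := hD (R n) (hRc n) x hx (F ∪ G)
    (fun t => (if t ∈ F then U t else univ) ∩ (if t ∈ G then V t else univ)) (by
      intro t _ htR
      have e := hxy t (mem_iUnion.2 ⟨n, htR⟩)
      refine ⟨?_, ?_, ?_⟩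
      · refine IsOpen.inter ?_ ?_ <;> split_ifs with h
        exacts [(hU t h).1, isOpen_univ, (hV t h).1, isOpen_univ]
      · split_ifs with h
        exacts [(hU t h).2, mem_univ _]
      · split_ifs with h
        · rw [e]; exact (hV t h).2
        · exact mem_univ _)
  have hdE : d ∈ E := hDE _ (hRc n) hdD
  -- moving `d` to `z` outside of `⋃ n, R n` changes neither membership in `E` nor the value of `f`
  let w : (∀ t, X t) → ∀ t, X t := fun z t => if t ∈ ⋃ n, R n then d t else z t
  have hw : ∀ z, ∀ t ∈ ⋃ n, R n, w z t = d t := fun z t ht => if_pos ht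
  have hw' : ∀ z, ∀ t ∉ ⋃ n, R n, w z t = z t := fun z t ht => if_neg ht
  have hwE : ∀ z, w z ∈ E := fun z => hES d _ (fun t ht => (hw z t (hSR ht)).symm) hdE
  have hwf : ∀ z, f (w z) = f d := fun z => hA d hdE _ (hwE z) fun t ht =>
    hw z t (mem_iUnion.2 ⟨n + 1, by rw [hR1]; exact Or.inr (mem_biUnion hdD ht)⟩)
  have h1 : |f (w x) - f x| < |f x - f y| / 2 := hF _ (hwE x) fun t ht => by
    by_cases h : t ∈ ⋃ n, R n
    · have htu := Finset.mem_union_left G ht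
      have := (hd t htu (hn t htu h)).1
      rw [if_pos ht] at this
      rwa [hw x t h]
    · rw [hw' x t h]; exact (hU t ht).2
  have h2 : |f (w y) - f y| < |f x - f y| / 2 := hG _ (hwE y) fun t ht => by
    by_cases h : t ∈ ⋃ n, R n
    · have htu := Finset.mem_union_right F ht
      have := (hd t htu (hn t htu h)).2
      rw [if_pos ht] at this
      rwa [hw y t h]
    · rw [hw' y t h]; exact (hV t ht).2
  rw [hwf] at h1 h2
  have h3 := abs_sub_le (f x) (f d) (f y)
  rw [abs_sub_comm (f x) (f d)] at h3
  linarith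

/-! ### Traces of functionally closed sets -/

/-- The case `α = 0`: zero sets of continuous functions on a set `E` determined by countably many
coordinates are traces of functionally closed sets of the whole product. -/
lemma exists_functionallyClosed_trace {E : Set (∀ t, X t)} {S : Set T} (hS : S.Countable)
    (hES : DeterminedBy E S) {B : Set ↥E} (hB : FunctionallyClosed B) :
    ∃ C : Set (∀ t, X t), FunctionallyClosed C ∧ Subtype.val ⁻¹' C = B := by
  classical
  obtain ⟨f₀, hf₀, rfl⟩ := hB
  let f : (∀ t, X t) → ℝ := fun x => if h : x ∈ E then f₀ ⟨x, h⟩ else 0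
  have hff : ∀ x : E, f x.1 = f₀ x := fun x => dif_pos x.2
  have hf : ContinuousOn f E := by
    rw [continuousOn_iff_continuous_domRestrict]
    exact hf₀.congr fun x => (hff x).symm
  obtain ⟨S', hSS', hS', hdet⟩ := exists_countable_determining hS hES hf
  have := hS'.to_subtype
  have : ∀ t, SecondCountableTopology (X t) := secondCountable_factor
  have : TopologicalSpace.MetrizableSpace (∀ t : S', X t.1) :=
    TopologicalSpace.metrizableSpace_of_t3_secondCountable _
  let P : Set (∀ t : S', X t.1) := proj S' '' {x | x ∈ E ∧ f x = 0}
  have hproj : Continuous (proj (X := X) S') := continuous_pi fun t => continuous_apply t.1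
  refine ⟨proj S' ⁻¹' closure P, ?_, ?_⟩
  · obtain ⟨g, hg, hgP⟩ := FunctionallyClosed.of_isClosed (isClosed_closure (s := P))
    exact ⟨g ∘ proj S', hg.comp hproj, by rw [hgP]; rfl⟩
  ext ⟨x, hx⟩
  simp only [mem_preimage, mem_singleton_iff]
  rw [← hff]
  refine ⟨fun hcl => ?_, fun h0 => subset_closure ⟨x, ⟨hx, h0⟩, rfl⟩⟩
  by_contra hne
  obtain ⟨F, U, hU, hF⟩ := exists_basic_nhd hf hx (abs_pos.2 hne)
  let V : Set (∀ t : S', X t.1) := ⋂ t ∈ F.subtype (· ∈ S'), (fun v => v t) ⁻¹' U t.1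
  have hV : IsOpen V := by
    refine isOpen_biInter_finset fun t ht => ?_
    exact (hU t.1 (Finset.mem_subtype.1 ht)).1.preimage (continuous_apply t)
  have hxV : proj S' x ∈ V := by
    simp only [V, mem_iInter]
    exact fun t ht => (hU t.1 (Finset.mem_subtype.1 ht)).2
  obtain ⟨_, hbV, b, ⟨hbE, hb0⟩, rfl⟩ := mem_closure_iff.1 hcl V hV hxV
  -- a point that agrees with `b` on `S'` and with `x` elsewhere is close to `x`, yet a zero of `f`
  let z : ∀ t, X t := fun t => if t ∈ S' then b t else x t
  have hzb : ∀ t ∈ S', z t = b t := fun t ht => if_pos ht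
  have hzE : z ∈ E := hES b z (fun t ht => (hzb t (hSS' ht)).symm) hbE
  have hz0 : f z = 0 := (hdet z hzE b hbE hzb).trans hb0
  have := hF z hzE fun t ht => by
    by_cases h : t ∈ S'
    · rw [hzb t h]
      exact mem_iInter₂.1 hbV ⟨t, h⟩ (Finset.mem_subtype.2 ht)
    · have : z t = x t := if_neg h
      rw [this]; exact (hU t ht).2
  rw [hz0, zero_sub, abs_neg] at this
  exact lt_irrefl _ this

/-! ### Induction on the functional classes -/

lemma FunctionallyClosed.exists_determinedBy {E : Set (∀ t, X t)} (hE : FunctionallyClosed E) :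
    ∃ S : Set T, S.Countable ∧ DeterminedBy E S := by
  obtain ⟨f, hf, rfl⟩ := hE
  obtain ⟨S, -, hS, h⟩ := exists_countable_determining (E := univ) countable_empty
    (fun _ _ _ _ => mem_univ _) hf.continuousOn
  refine ⟨S, hS, fun x y hxy hx => ?_⟩
  rw [mem_preimage, ← h x (mem_univ _) y (mem_univ _) hxy]
  exact hx

lemma FunClass.exists_determinedBy {b : Bool} {β : Ordinal.{0}} {E : Set (∀ t, X t)}
    (hE : FunClass (∀ t, X t) b β E) : ∃ S : Set T, S.Countable ∧ DeterminedBy E S := by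
  induction hE with
  | open_ A h =>
    obtain ⟨S, hS, hd⟩ := FunctionallyClosed.exists_determinedBy h
    exact ⟨S, hS, by simpa using hd.compl⟩
  | closed_ A h => exact h.exists_determinedBy
  | union α A β _ _ _ ih =>
    choose S hS hd using ih
    refine ⟨⋃ n, S n, countable_iUnion hS, fun x y hxy hx => ?_⟩
    obtain ⟨n, hn⟩ := mem_iUnion.1 hx
    exact mem_iUnion.2 ⟨n, (hd n).mono (subset_iUnion S n) x y hxy hn⟩
  | inter α A β _ _ _ ih =>
    choose S hS hd using ih
    refine ⟨⋃ n, S n, countable_iUnion hS, fun x y hxy hx => mem_iInter.2 fun n => ?_⟩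
    exact (hd n).mono (subset_iUnion S n) x y hxy (mem_iInter.1 hx n)

lemma FunClass.exists_trace {E : Set (∀ t, X t)} {S : Set T} (hS : S.Countable)
    (hES : DeterminedBy E S) {b : Bool} {α : Ordinal.{0}} {B : Set ↥E}
    (hB : FunClass ↥E b α B) :
    ∃ C : Set (∀ t, X t), FunClass (∀ t, X t) b α C ∧ Subtype.val ⁻¹' C = B := by
  induction hB with
  | open_ A h =>
    obtain ⟨C, hC, hCA⟩ := exists_functionallyClosed_trace hS hES h
    refine ⟨Cᶜ, .open_ _ (by simpa [FunctionallyOpen] using hC), ?_⟩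
    rw [preimage_compl, hCA, compl_compl]
  | closed_ A h =>
    obtain ⟨C, hC, hCA⟩ := exists_functionallyClosed_trace hS hES h
    exact ⟨C, .closed_ _ hC, hCA⟩
  | union α A β hα hβ _ ih =>
    choose C hC hCA using ih
    exact ⟨⋃ n, C n, .union α C β hα hβ hC, by simp only [preimage_iUnion, hCA]⟩
  | inter α A β hα hβ _ ih =>
    choose C hC hCA using ih
    exact ⟨⋂ n, C n, .inter α C β hα hβ hC, by simp only [preimage_iInter, hCA]⟩

end Product

/-- in a product of separable metrizable spaces every functionally
measurable set is α-embedded for every α < ω₁. -/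
theorem statement11 {T : Type u} {X : T → Type v} [∀ t, TopologicalSpace (X t)]
    [∀ t, Nonempty (X t)] [∀ t, TopologicalSpace.SeparableSpace (X t)]
    [∀ t, TopologicalSpace.MetrizableSpace (X t)]
    (E : Set (∀ t, X t)) (hE : FunctionallyMeasurable E)
    (α : Ordinal.{0}) (hα : α < (Cardinal.aleph 1).ord) :
    IsAlphaEmbedded α E := by
  obtain ⟨b, β, -, hEβ⟩ := hE
  obtain ⟨S, hS, hES⟩ := hEβ.exists_determinedBy
  intro B hBE hB
  obtain ⟨C, hC, hCB⟩ := hB.exists_trace hS hES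
  refine ⟨C, hC, ?_⟩
  rw [inter_comm, (Subtype.preimage_val_eq_preimage_val_iff E C B).1 hCB]
  exact inter_eq_right.2 hBE
end

section
/- Let Y = ∏_{t∈(0,1]} X_t where X_t = ℕ with the discrete topology for every t ∈ (0,1], and for i ∈ {1,2} let F_i = {y = (y_t)_{t∈(0,1]} ∈ Y : for every n ∈ ℕ with n ≠ i, the set {t ∈ (0,1] : y_t = n} has at most one element}. Then F₁ and F₂ are closed subsets of Y and F₁ ∩ F₂ = ∅. -/
/-!
Each `Fset i` is an intersection of conditions on two coordinates, `y s = n → y t = n → s = t`,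
and such conditions are clopen since the factors are discrete (`isClosed_Fset`).
A point of `Fset i ∩ Fset j` with `i ≠ j` takes every value at most once, that is, it is an
injection of the uncountable set `(0,1]` into the countable set `{1, 2, ...}`, which is impossible
(`Fset_inter_eq_empty`).
-/

open Set Topology

/-- The natural numbers `{1, 2, 3, ...}` with the discrete topology
(as a subspace of the discrete space `ℕ`). -/
abbrev PosNat : Type := {n : ℕ // 0 < n}

/-- The product `Y = ℕ^{(0,1]}` where `ℕ = {1,2,...}` is discrete. -/
abbrev Yprod : Type := ↥(Set.Ioc (0 : ℝ) 1) → PosNat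

/-- Stone's set `F i = {y ∈ Y : |{t : y t = n}| ≤ 1 for every n ≠ i}`. -/
def Fset (i : PosNat) : Set Yprod :=
  {y | ∀ n : PosNat, n ≠ i → {t : ↥(Set.Ioc (0 : ℝ) 1) | y t = n}.Subsingleton}

/-- The product `X = [0,1] × ℕ^{(0,1]}`. -/
abbrev Xprod : Type := ↥(Set.Icc (0 : ℝ) 1) × Yprod

theorem isClosed_Fset (i : PosNat) : IsClosed (Fset i) := by
  have h : Fset i = ⋂ (n : PosNat) (_ : n ≠ i) (s : ↥(Set.Ioc (0 : ℝ) 1))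
      (t : ↥(Set.Ioc (0 : ℝ) 1)) (_ : s ≠ t), {y : Yprod | y s = n ∧ y t = n}ᶜ := by
    ext y
    simp only [Fset, Set.Subsingleton, mem_ofPred_eq, mem_iInter, mem_compl_iff]
    constructor
    · rintro hy n hn s t hst ⟨hs, ht⟩
      exact hst (hy n hn hs ht)
    · intro hy n hn s hs t ht
      by_contra hst
      exact hy n hn s t hst ⟨hs, ht⟩
  rw [h]
  refine isClosed_iInter fun n => isClosed_iInter fun _ => isClosed_iInter fun s =>
    isClosed_iInter fun t => isClosed_iInter fun _ => IsOpen.isClosed_compl ?_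
  have hopen (u : ↥(Set.Ioc (0 : ℝ) 1)) : IsOpen {y : Yprod | y u = n} :=
    (isOpen_discrete ({n} : Set PosNat)).preimage
      (continuous_apply (A := fun _ => PosNat) u)
  exact (hopen s).inter (hopen t)

theorem Fset_inter_eq_empty {i j : PosNat} (hij : i ≠ j) : Fset i ∩ Fset j = ∅ := by
  rw [eq_empty_iff_forall_notMem]
  rintro y ⟨hi, hj⟩
  have hinj : Function.Injective y := by
    intro s t hst
    by_cases h : y t = i
    · exact hj (y t) (h ▸ hij) hst rfl
    · exact hi (y t) h hst rfl
  have hc : (Set.Ioc (0 : ℝ) 1).Countable := Set.countable_coe_iff.mp hinj.countable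
  exact absurd (Cardinal.Real.Ioc_countable_iff.mp hc) (by norm_num)

/-- `F₁` and `F₂` are closed and disjoint in `Y`. -/
theorem statement13 :
    IsClosed (Fset ⟨1, one_pos⟩) ∧ IsClosed (Fset ⟨2, two_pos⟩) ∧
    Fset ⟨1, one_pos⟩ ∩ Fset ⟨2, two_pos⟩ = ∅ := by
  exact ⟨isClosed_Fset _, isClosed_Fset _, Fset_inter_eq_empty (by decide)⟩
end
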